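/- arXiv:1901.09184 — 2 statements merged into one kernel-verified Lean document; each statement's English description precedes it below -/
import Mathlib

section
/- For every bounded function v ∈ ℝ^S and every state s ∈ S, the one-step minimax equality holds over mixed strategies: max_{μ∈P(A)} min_{ν∈P(B)} [r^{μ,ν}(s) + γ (P^{μ,ν} v)(s)] = min_{ν∈P(B)} max_{μ∈P(A)} [r^{μ,ν}(s) + γ (P^{μ,ν} v)(s)], with all indicated maxima and minima attained; equivalently, T v = T̄ v componentwise. -/
/-!
Fix the state `s` and put `g(a,b) = r(s,a,b) + γ ∑ s', P(s'|s,a,b) v(s')`, a continuous function on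
`A × B`. By linearity of the integral, `(T^{μ,ν} v)(s)` is the expected payoff `∫∫ g dν(s) dμ(s)`
(`Tpol_eq_expectedPayoff`), so the claim is about the zero-sum game with mixed strategies and
payoff `g`.

Sion's minimax theorem is available for compact convex subsets of topological vector spaces, so
probability measures are mapped to linear-functional coordinates `μ ↦ (f ↦ ∫ f dμ)` in the product
space `C(X, ℝ) → ℝ` (`integralVec`). The image of `ProbabilityMeasure X` is convex, and it is
compact because `ProbabilityMeasure X` is compact for weak convergence. With one strategy fixed,
the expected payoff is the evaluation of the other player's vector at a continuous function
(partial integration of `g`; Fubini for the second player), hence linear and continuous. Sion's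
theorem then gives a saddle point (`exists_saddle`). Attainment of the inner extrema is compactness
again, and the saddle point yields the equality of values and the outer extrema
(`minimax_of_saddle`).
-/

open MeasureTheory

open MeasureTheory

/-- Expected one-step reward `r^{μ,ν}(s) = ∫_A ∫_B r(s,a,b) dν(s)(b) dμ(s)(a)`. -/
noncomputable def rPol {S A B : Type*} [MeasurableSpace A] [MeasurableSpace B]
    (r : S → A → B → ℝ)
    (μ : S → ProbabilityMeasure A) (ν : S → ProbabilityMeasure B) (s : S) : ℝ :=
  ∫ a, ∫ b, r s a b ∂(ν s : Measure B) ∂(μ s : Measure A)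

/-- Induced stochastic matrix `P^{μ,ν}(s,s') = ∫_A ∫_B P(s'|s,a,b) dν(s)(b) dμ(s)(a)`. -/
noncomputable def Pmat {S A B : Type*} [Fintype S] [MeasurableSpace A] [MeasurableSpace B]
    (P : S → S → A → B → ℝ)
    (μ : S → ProbabilityMeasure A) (ν : S → ProbabilityMeasure B) : Matrix S S ℝ :=
  Matrix.of fun s s' => ∫ a, ∫ b, P s s' a b ∂(ν s : Measure B) ∂(μ s : Measure A)

/-- Fixed-policy Bellman operator `T^{μ,ν} v = r^{μ,ν} + γ P^{μ,ν} v`. -/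
noncomputable def Tpol {S A B : Type*} [Fintype S] [MeasurableSpace A] [MeasurableSpace B]
    (γ : ℝ) (r : S → A → B → ℝ) (P : S → S → A → B → ℝ)
    (μ : S → ProbabilityMeasure A) (ν : S → ProbabilityMeasure B)
    (v : S → ℝ) : S → ℝ :=
  fun s => rPol r μ ν s + γ * (Pmat P μ ν).mulVec v s

/-- Value of the pair of stationary policies: `v^{μ,ν} = Σ_{t≥0} γ^t (P^{μ,ν})^t r^{μ,ν}`. -/
noncomputable def vVal {S A B : Type*} [Fintype S] [DecidableEq S]
    [MeasurableSpace A] [MeasurableSpace B]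
    (γ : ℝ) (r : S → A → B → ℝ) (P : S → S → A → B → ℝ)
    (μ : S → ProbabilityMeasure A) (ν : S → ProbabilityMeasure B) : S → ℝ :=
  ∑' t : ℕ, γ ^ t • ((Pmat P μ ν ^ t).mulVec (rPol r μ ν))

/-! ### Probability measures as a compact convex set -/

section IntegralVec

variable {X : Type*} [MetricSpace X] [CompactSpace X] [MeasurableSpace X] [BorelSpace X]

/-- The family of integrals of a probability measure against all continuous functions, as a point
of the topological vector space `C(X, ℝ) → ℝ` with the product topology. -/
noncomputable def integralVec (μ : ProbabilityMeasure X) : C(X, ℝ) → ℝ :=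
  fun f => ∫ x, f x ∂(μ : Measure X)

lemma continuous_integralVec : Continuous (integralVec (X := X)) :=
  continuous_pi fun f => ProbabilityMeasure.continuous_integral_continuousMap f

lemma integrable_of_continuous {f : X → ℝ} (hf : Continuous f) (μ : Measure X)
    [IsFiniteMeasure μ] : Integrable f μ :=
  hf.integrable_of_hasCompactSupport (HasCompactSupport.of_compactSpace f)

lemma isCompact_range_integralVec : IsCompact (Set.range (integralVec (X := X))) :=
  isCompact_range continuous_integralVec

lemma convex_range_integralVec : Convex ℝ (Set.range (integralVec (X := X))) := by
  rintro _ ⟨μ, rfl⟩ _ ⟨ν, rfl⟩ a b ha hb hab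
  lift a to NNReal using ha
  lift b to NNReal using hb
  have hab' : a + b = 1 := by exact_mod_cast hab
  have hprob : IsProbabilityMeasure (a • (μ : Measure X) + b • (ν : Measure X)) := by
    constructor
    simp only [Measure.coe_add, Pi.add_apply, Measure.smul_apply, measure_univ]
    simp only [ENNReal.smul_def, smul_eq_mul, mul_one]
    exact_mod_cast hab'
  refine ⟨⟨_, hprob⟩, ?_⟩
  funext f
  have h1 := integrable_of_continuous f.continuous (a • (μ : Measure X))
  have h2 := integrable_of_continuous f.continuous (b • (ν : Measure X))
  change ∫ x, f x ∂(a • (μ : Measure X) + b • (ν : Measure X)) = _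
  rw [integral_add_measure h1 h2, integral_smul_nnreal_measure, integral_smul_nnreal_measure]
  rfl

end IntegralVec

/-! ### The mixed extension of a continuous game -/

section Game

lemma continuous_partialIntegral {A B : Type*} [MetricSpace A] [CompactSpace A]
    [MetricSpace B] [CompactSpace B] [MeasurableSpace B] [BorelSpace B]
    {g : A → B → ℝ} (hg : Continuous fun p : A × B => g p.1 p.2)
    (ν : Measure B) [IsFiniteMeasure ν] : Continuous fun a => ∫ b, g a b ∂ν := by
  simpa using continuous_parametric_integral_of_continuous (μ := ν) (f := g) hg isCompact_univ

lemma continuous_flip {A B : Type*} [TopologicalSpace A] [TopologicalSpace B]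
    {g : A → B → ℝ} (hg : Continuous fun p : A × B => g p.1 p.2) :
    Continuous fun p : B × A => g p.2 p.1 :=
  hg.comp continuous_swap

variable {A B : Type*}
    [MetricSpace A] [CompactSpace A] [MeasurableSpace A] [BorelSpace A]
    [MetricSpace B] [CompactSpace B] [MeasurableSpace B] [BorelSpace B]

/-- Expected payoff of the mixed strategies `μ`, `ν` in the game with payoff `g`. -/
noncomputable def expectedPayoff (g : A → B → ℝ) (μ : ProbabilityMeasure A)
    (ν : ProbabilityMeasure B) : ℝ :=
  ∫ a, ∫ b, g a b ∂(ν : Measure B) ∂(μ : Measure A)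

lemma expectedPayoff_swap {g : A → B → ℝ} (hg : Continuous fun p : A × B => g p.1 p.2)
    (μ : ProbabilityMeasure A) (ν : ProbabilityMeasure B) :
    expectedPayoff g μ ν = expectedPayoff (fun b a => g a b) ν μ :=
  integral_integral_swap_of_hasCompactSupport hg (HasCompactSupport.of_compactSpace _)

lemma continuous_expectedPayoff_left {g : A → B → ℝ}
    (hg : Continuous fun p : A × B => g p.1 p.2) (ν : ProbabilityMeasure B) :
    Continuous fun μ => expectedPayoff g μ ν :=
  ProbabilityMeasure.continuous_integral_continuousMap
    (⟨_, continuous_partialIntegral hg (ν : Measure B)⟩ : C(A, ℝ))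

lemma continuous_expectedPayoff_right {g : A → B → ℝ}
    (hg : Continuous fun p : A × B => g p.1 p.2) (μ : ProbabilityMeasure A) :
    Continuous fun ν => expectedPayoff g μ ν := by
  simp_rw [expectedPayoff_swap hg]
  exact continuous_expectedPayoff_left (continuous_flip hg) μ

/-- A continuous game on compact metric spaces has an equilibrium in mixed strategies. -/
lemma exists_saddle [Nonempty A] [Nonempty B] {g : A → B → ℝ}
    (hg : Continuous fun p : A × B => g p.1 p.2) :
    ∃ (μ0 : ProbabilityMeasure A) (ν0 : ProbabilityMeasure B),
      ∀ μ ν, expectedPayoff g μ ν0 ≤ expectedPayoff g μ0 ν := by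
  let h (ν : ProbabilityMeasure B) : C(A, ℝ) := ⟨_, continuous_partialIntegral hg (ν : Measure B)⟩
  let k (μ : ProbabilityMeasure A) : C(B, ℝ) :=
    ⟨_, continuous_partialIntegral (g := fun b a => g a b) (continuous_flip hg) (μ : Measure A)⟩
  have hh (μ ν) : integralVec μ (h ν) = expectedPayoff g μ ν := rfl
  have hk (μ ν) : integralVec ν (k μ) = expectedPayoff g μ ν := (expectedPayoff_swap hg μ ν).symm
  have : Nonempty (ProbabilityMeasure A) := ⟨⟨Measure.dirac (Classical.arbitrary A), inferInstance⟩⟩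
  have : Nonempty (ProbabilityMeasure B) := ⟨⟨Measure.dirac (Classical.arbitrary B), inferInstance⟩⟩
  -- The payoff transported to the vector spaces, through an arbitrary preimage of `x`; on the
  -- ranges its value does not depend on the preimage, by `hF`.
  let F : (C(B, ℝ) → ℝ) → (C(A, ℝ) → ℝ) → ℝ := fun x y => y (h (Function.invFun integralVec x))
  have hF (x) (hx : x ∈ Set.range (integralVec (X := B))) (μ) : F x (integralVec μ) = x (k μ) := by
    calc F x (integralVec μ) = integralVec (Function.invFun integralVec x) (k μ) := (hk μ _).symm
      _ = x (k μ) := by rw [Function.invFun_eq hx]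
  obtain ⟨x, ⟨ν0, rfl⟩, y, ⟨μ0, rfl⟩, hxy⟩ := Sion.exists_isSaddlePointOn
    (X := Set.range (integralVec (X := B))) (Y := Set.range (integralVec (X := A))) (f := F)
    (Set.range_nonempty _) convex_range_integralVec isCompact_range_integralVec
    (by
      rintro _ ⟨μ, rfl⟩
      exact ((continuous_apply (k μ)).continuousOn.congr fun x hx => hF x hx μ).lowerSemicontinuousOn)
    (by
      rintro _ ⟨μ, rfl⟩
      refine ConvexOn.quasiconvexOn ?_
      refine ((LinearMap.proj (R := ℝ) (φ := fun _ : C(B, ℝ) => ℝ) (k μ)).convexOn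
        convex_range_integralVec).congr fun x hx => (hF x hx μ).symm)
    convex_range_integralVec (Set.range_nonempty _) isCompact_range_integralVec
    (fun x _ => (continuous_apply _).continuousOn.upperSemicontinuousOn)
    (fun x _ => ((LinearMap.proj (R := ℝ) (φ := fun _ : C(A, ℝ) => ℝ) _).concaveOn
        convex_range_integralVec).quasiconcaveOn)
  refine ⟨μ0, ν0, fun μ ν => ?_⟩
  have := hxy _ ⟨ν, rfl⟩ _ ⟨μ, rfl⟩
  rwa [hF _ ⟨ν0, rfl⟩, hF _ ⟨ν, rfl⟩, hk, hk] at this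

end Game

/-! ### Values from a saddle point -/

/-- A saddle point forces equality of the lower and upper values and attains the outer extrema.
The attained inner extrema `hmin`, `hmax` supply the boundedness without which the real-valued
`⨅` and `⨆` would be junk. -/
lemma minimax_of_saddle {X Y : Type*} (T : X → Y → ℝ)
    (hmin : ∀ x, ∃ y0, ∀ y, T x y0 ≤ T x y) (hmax : ∀ y, ∃ x0, ∀ x, T x y ≤ T x0 y)
    {x0 : X} {y0 : Y} (hs : ∀ x y, T x y0 ≤ T x0 y) :
    (⨆ x, ⨅ y, T x y) = (⨅ y, ⨆ x, T x y)
    ∧ (∀ x, (⨅ y, T x y) ≤ ⨅ y, T x0 y) ∧ (∀ y, (⨆ x, T x y0) ≤ ⨆ x, T x y) := by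
  have : Nonempty X := ⟨x0⟩
  have : Nonempty Y := ⟨y0⟩
  have hbelow (x) : BddBelow (Set.range (T x)) := by
    obtain ⟨y, hy⟩ := hmin x
    exact ⟨T x y, by rintro _ ⟨z, rfl⟩; exact hy z⟩
  have habove (y) : BddAbove (Set.range fun x => T x y) := by
    obtain ⟨x, hx⟩ := hmax y
    exact ⟨T x y, by rintro _ ⟨z, rfl⟩; exact hx z⟩
  have hinf : (⨅ y, T x0 y) = T x0 y0 :=
    le_antisymm (ciInf_le (hbelow x0) y0) (le_ciInf fun y => hs x0 y)
  have hsup : (⨆ x, T x y0) = T x0 y0 :=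
    le_antisymm (ciSup_le fun x => hs x y0) (le_ciSup (habove y0) x0)
  have hinf_le (x) : (⨅ y, T x y) ≤ T x0 y0 := (ciInf_le (hbelow x) y0).trans (hs x y0)
  have hle_sup (y) : T x0 y0 ≤ ⨆ x, T x y := (hs x0 y).trans (le_ciSup (habove y) x0)
  have hlower : (⨆ x, ⨅ y, T x y) = T x0 y0 :=
    le_antisymm (ciSup_le hinf_le)
      (hinf.ge.trans (le_ciSup ⟨T x0 y0, by rintro _ ⟨x, rfl⟩; exact hinf_le x⟩ x0))
  have hupper : (⨅ y, ⨆ x, T x y) = T x0 y0 :=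
    le_antisymm
      ((ciInf_le ⟨T x0 y0, by rintro _ ⟨y, rfl⟩; exact hle_sup y⟩ y0).trans hsup.le)
      (le_ciInf hle_sup)
  exact ⟨hlower.trans hupper.symm, fun x => (hinf_le x).trans hinf.ge,
    fun y => hsup.le.trans (hle_sup y)⟩

/-! ### The one-step game of a Markov game -/

lemma Tpol_eq_expectedPayoff {S A B : Type*} [Fintype S]
    [MetricSpace A] [CompactSpace A] [MeasurableSpace A] [BorelSpace A]
    [MetricSpace B] [CompactSpace B] [MeasurableSpace B] [BorelSpace B]
    (γ : ℝ)
    (r : S → A → B → ℝ) (hr : ∀ s, Continuous fun p : A × B => r s p.1 p.2)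
    (P : S → S → A → B → ℝ)
    (hPcont : ∀ s s', Continuous fun p : A × B => P s s' p.1 p.2)
    (v : S → ℝ) (s : S) (μ : S → ProbabilityMeasure A) (ν : S → ProbabilityMeasure B) :
    Tpol γ r P μ ν v s
      = expectedPayoff (fun a b => r s a b + γ * ∑ s', P s s' a b * v s') (μ s) (ν s) := by
  have hslice {g : A → B → ℝ} (hg : Continuous fun p : A × B => g p.1 p.2) (a : A) :
      Integrable (g a) (ν s : Measure B) :=
    integrable_of_continuous (hg.comp (by fun_prop : Continuous fun b => (a, b))) _
  have hpart {g : A → B → ℝ} (hg : Continuous fun p : A × B => g p.1 p.2) :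
      Integrable (fun a => ∫ b, g a b ∂(ν s : Measure B)) (μ s : Measure A) :=
    integrable_of_continuous (continuous_partialIntegral hg _) _
  have hinner (a : A) : ∫ b, (r s a b + γ * ∑ s', P s s' a b * v s') ∂(ν s : Measure B)
      = ∫ b, r s a b ∂(ν s : Measure B)
        + γ * ∑ s', (∫ b, P s s' a b ∂(ν s : Measure B)) * v s' := by
    rw [integral_add (hslice (hr s) a)
      ((integrable_finsetSum _ fun s' _ => (hslice (hPcont s s') a).mul_const _).const_mul _),
      integral_const_mul,
      integral_finsetSum _ fun s' _ => (hslice (hPcont s s') a).mul_const _]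
    simp_rw [integral_mul_const]
  unfold expectedPayoff
  simp_rw [hinner]
  rw [integral_add (hpart (hr s))
      ((integrable_finsetSum _ fun s' _ => (hpart (hPcont s s')).mul_const _).const_mul _),
    integral_const_mul, integral_finsetSum _ fun s' _ => (hpart (hPcont s s')).mul_const _]
  simp_rw [integral_mul_const]
  rfl

theorem stmt0 {S A B : Type*} [Fintype S] [DecidableEq S]
    [MetricSpace A] [CompactSpace A] [Nonempty A] [MeasurableSpace A] [BorelSpace A]
    [MetricSpace B] [CompactSpace B] [Nonempty B] [MeasurableSpace B] [BorelSpace B]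
    (γ : ℝ) (hγ : γ ∈ Set.Ioo (0:ℝ) 1)
    (r : S → A → B → ℝ) (hr : ∀ s, Continuous fun p : A × B => r s p.1 p.2)
    (P : S → S → A → B → ℝ)
    (hPcont : ∀ s s', Continuous fun p : A × B => P s s' p.1 p.2)
    (hP0 : ∀ s s' a b, 0 ≤ P s s' a b) (hP1 : ∀ s s' a b, P s s' a b ≤ 1)
    (hPsum : ∀ s a b, ∑ s', P s s' a b = 1)
    (v : S → ℝ) (s : S) :
    (⨆ μ : S → ProbabilityMeasure A, ⨅ ν : S → ProbabilityMeasure B, Tpol γ r P μ ν v s)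
      = (⨅ ν : S → ProbabilityMeasure B, ⨆ μ : S → ProbabilityMeasure A, Tpol γ r P μ ν v s)
    ∧ (∃ μ0 : S → ProbabilityMeasure A, ∀ μ : S → ProbabilityMeasure A,
        (⨅ ν : S → ProbabilityMeasure B, Tpol γ r P μ ν v s)
          ≤ ⨅ ν : S → ProbabilityMeasure B, Tpol γ r P μ0 ν v s)
    ∧ (∀ μ : S → ProbabilityMeasure A, ∃ ν0 : S → ProbabilityMeasure B,
        ∀ ν : S → ProbabilityMeasure B, Tpol γ r P μ ν0 v s ≤ Tpol γ r P μ ν v s)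
    ∧ (∃ ν0 : S → ProbabilityMeasure B, ∀ ν : S → ProbabilityMeasure B,
        (⨆ μ : S → ProbabilityMeasure A, Tpol γ r P μ ν0 v s)
          ≤ ⨆ μ : S → ProbabilityMeasure A, Tpol γ r P μ ν v s)
    ∧ (∀ ν : S → ProbabilityMeasure B, ∃ μ0 : S → ProbabilityMeasure A,
        ∀ μ : S → ProbabilityMeasure A, Tpol γ r P μ ν v s ≤ Tpol γ r P μ0 ν v s) := by
  have hg : Continuous fun p : A × B => r s p.1 p.2 + γ * ∑ s', P s s' p.1 p.2 * v s' :=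
    (hr s).add (continuous_const.mul
      (continuous_finsetSum _ fun s' _ => (hPcont s s').mul continuous_const))
  have : Nonempty (ProbabilityMeasure A) := ⟨⟨Measure.dirac (Classical.arbitrary A), inferInstance⟩⟩
  have : Nonempty (ProbabilityMeasure B) := ⟨⟨Measure.dirac (Classical.arbitrary B), inferInstance⟩⟩
  simp_rw [Tpol_eq_expectedPayoff γ r hr P hPcont v s]
  generalize hgdef : (fun a b => r s a b + γ * ∑ s', P s s' a b * v s') = g
  replace hg : Continuous fun p : A × B => g p.1 p.2 := hgdef ▸ hg
  -- Only the value of a policy at `s` matters, so optimal strategies extend to constant policies.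
  have hmin (μ : S → ProbabilityMeasure A) : ∃ ν0 : S → ProbabilityMeasure B,
      ∀ ν : S → ProbabilityMeasure B,
        expectedPayoff g (μ s) (ν0 s) ≤ expectedPayoff g (μ s) (ν s) := by
    obtain ⟨ν0, -, h⟩ := isCompact_univ.exists_isMinOn Set.univ_nonempty
      (continuous_expectedPayoff_right hg (μ s)).continuousOn
    exact ⟨fun _ => ν0, fun ν => h (Set.mem_univ (ν s))⟩
  have hmax (ν : S → ProbabilityMeasure B) : ∃ μ0 : S → ProbabilityMeasure A,
      ∀ μ : S → ProbabilityMeasure A,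
        expectedPayoff g (μ s) (ν s) ≤ expectedPayoff g (μ0 s) (ν s) := by
    obtain ⟨μ0, -, h⟩ := isCompact_univ.exists_isMaxOn Set.univ_nonempty
      (continuous_expectedPayoff_left hg (ν s)).continuousOn
    exact ⟨fun _ => μ0, fun μ => h (Set.mem_univ (μ s))⟩
  obtain ⟨μ0, ν0, hsaddle⟩ := exists_saddle hg
  obtain ⟨heq, hμ0, hν0⟩ := minimax_of_saddle
    (fun (μ : S → ProbabilityMeasure A) (ν : S → ProbabilityMeasure B) =>
      expectedPayoff g (μ s) (ν s))
    hmin hmax (x0 := fun _ => μ0) (y0 := fun _ => ν0) (fun μ ν => hsaddle (μ s) (ν s))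
  exact ⟨heq, ⟨fun _ => μ0, hμ0⟩, hmin, ⟨fun _ => ν0, hν0⟩, hmax⟩
end

section
/- For a fixed adversary stationary policy ν : S → P(B), the supremum sup_{μ} v^{μ,ν} over stationary policies μ : S → P(A) is attained (componentwise by a single policy), and the optimal counter-strategy value v^ν := max_μ v^{μ,ν} is the unique fixed point of the operator T̄^ν; symmetrically, for a fixed μ, inf_ν v^{μ,ν} is attained and is the unique fixed point of T^μ. -/
/-!
With `ν` fixed the game is a discounted Markov decision process in `μ`. The value `v^{μ,ν}`
satisfies `v = T^{μ,ν} v` (`discounted_value_eq`), and a maximum principle for stochastic matrices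
(`nonpos_of_le_discounted`) shows that `T^{μ,ν} w ≤ w` implies `v^{μ,ν} ≤ w` and that
`T^{μ,ν} w = w` implies `v^{μ,ν} = w`.

For every `w` some policy attains `max_μ T^{μ,ν} w` at all states simultaneously
(`exists_greedy`): the integrand `a ↦ ∫ (r + γ ∑ P w) dν` is continuous on a compact space, so the
Dirac mass at a maximizer is optimal at each state. Hence, if `w` is a fixed point of `T̄^ν` and
`μ0` is greedy for `w`, then `v^{μ0,ν} = w` while `v^{μ,ν} ≤ w` for all `μ`. This gives attainment
and uniqueness at once, and the existence of a fixed point is Banach's theorem, as `T̄^ν` is a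
`γ`-contraction in the sup norm (`mdp_optimality`, `maximizer_side`).

The statement for the minimizer is the one for the maximizer in the game with the two players
exchanged and the reward negated; Fubini's theorem identifies the two iterated integrals.
-/

open MeasureTheory

/-! ### Discounted stochastic matrices -/

/-- Maximum principle: evaluate the hypothesis at a state where `d` is maximal. -/
lemma nonpos_of_le_discounted {S : Type*} [Fintype S] {γ : ℝ} (hγ : γ ∈ Set.Ioo (0 : ℝ) 1)
    {Q : Matrix S S ℝ} (h0 : ∀ s s', 0 ≤ Q s s') (h1 : ∀ s, ∑ s', Q s s' = 1)
    {d : S → ℝ} (hd : ∀ s, d s ≤ γ * Q.mulVec d s) (s : S) : d s ≤ 0 := by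
  have : Nonempty S := ⟨s⟩
  obtain ⟨m, hm⟩ := Finite.exists_max d
  have hQ : Q.mulVec d m ≤ d m := by
    calc Q.mulVec d m = ∑ s', Q m s' * d s' := rfl
      _ ≤ ∑ s', Q m s' * d m :=
        Finset.sum_le_sum fun s' _ => mul_le_mul_of_nonneg_left (hm s') (h0 m s')
      _ = d m := by rw [← Finset.sum_mul, h1, one_mul]
  have h2 : d m ≤ γ * d m := (hd m).trans (mul_le_mul_of_nonneg_left hQ hγ.1.le)
  have h3 : d m ≤ 0 := by nlinarith [hγ.2]
  exact (hm s).trans h3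

lemma abs_mulVec_le {S : Type*} [Fintype S]
    {Q : Matrix S S ℝ} (h0 : ∀ s s', 0 ≤ Q s s') (h1 : ∀ s, ∑ s', Q s s' = 1)
    {d : S → ℝ} {C : ℝ} (hd : ∀ s, |d s| ≤ C) (s : S) : |Q.mulVec d s| ≤ C := by
  calc |Q.mulVec d s| = |∑ s', Q s s' * d s'| := rfl
    _ ≤ ∑ s', |Q s s' * d s'| := Finset.abs_sum_le_sum_abs _ _
    _ ≤ ∑ s', Q s s' * C := Finset.sum_le_sum fun s' _ => by
        rw [abs_mul, abs_of_nonneg (h0 s s')]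
        exact mul_le_mul_of_nonneg_left (hd s') (h0 s s')
    _ = C := by rw [← Finset.sum_mul, h1, one_mul]

lemma abs_pow_mulVec_le {S : Type*} [Fintype S] [DecidableEq S]
    {Q : Matrix S S ℝ} (h0 : ∀ s s', 0 ≤ Q s s') (h1 : ∀ s, ∑ s', Q s s' = 1)
    {d : S → ℝ} {C : ℝ} (hd : ∀ s, |d s| ≤ C) (t : ℕ) (s : S) :
    |(Q ^ t).mulVec d s| ≤ C := by
  induction t generalizing s with
  | zero => simpa using hd s
  | succ t ih =>
    rw [pow_succ', ← Matrix.mulVec_mulVec]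
    exact abs_mulVec_le h0 h1 ih s

lemma discounted_value_eq {S : Type*} [Fintype S] [DecidableEq S] {γ : ℝ}
    (hγ : γ ∈ Set.Ioo (0 : ℝ) 1)
    {Q : Matrix S S ℝ} (h0 : ∀ s s', 0 ≤ Q s s') (h1 : ∀ s, ∑ s', Q s s' = 1) (R : S → ℝ) :
    (∑' t : ℕ, γ ^ t • ((Q ^ t).mulVec R)) =
      R + γ • Q.mulVec (∑' t : ℕ, γ ^ t • ((Q ^ t).mulVec R)) := by
  have hsum : Summable fun t : ℕ => γ ^ t • ((Q ^ t).mulVec R) := by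
    refine Summable.of_norm_bounded
      ((summable_geometric_of_lt_one hγ.1.le hγ.2).mul_right ‖R‖) fun t => ?_
    rw [norm_smul, norm_pow, Real.norm_of_nonneg hγ.1.le]
    refine mul_le_mul_of_nonneg_left ?_ (pow_nonneg hγ.1.le t)
    refine (pi_norm_le_iff_of_nonneg (norm_nonneg R)).2 fun s => ?_
    exact abs_pow_mulVec_le h0 h1 (fun s => norm_le_pi_norm R s) t s
  let L : (S → ℝ) →L[ℝ] (S → ℝ) := γ • LinearMap.toContinuousLinearMap Q.mulVecLin
  have hL : ∀ w, L w = γ • Q.mulVec w := fun w => rfl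
  rw [← hL, L.map_tsum hsum, hsum.tsum_eq_zero_add]
  congr 1
  · simp
  · refine tsum_congr fun t => ?_
    rw [hL, Matrix.mulVec_smul, smul_smul, Matrix.mulVec_mulVec, pow_succ' γ, pow_succ' Q]

/-! ### Optimality in a discounted decision process -/

/-- Discounted decision process with an abstract set `Pol` of policies, rewards `R`, stochastic
matrices `Q` and values `V` (characterized by `V = R + γ Q V`). The hypothesis `hgr` provides, for
every `w`, a policy maximizing the one-step operator at all states simultaneously. -/
lemma mdp_optimality {S Pol : Type*} [Fintype S] {γ : ℝ}
    (hγ : γ ∈ Set.Ioo (0 : ℝ) 1) (R V : Pol → S → ℝ) (Q : Pol → Matrix S S ℝ)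
    (h0 : ∀ p s s', 0 ≤ Q p s s') (h1 : ∀ p s, ∑ s', Q p s s' = 1)
    (hV : ∀ p s, V p s = R p s + γ * (Q p).mulVec (V p) s)
    (hgr : ∀ w : S → ℝ, ∃ p0, ∀ p s,
      R p s + γ * (Q p).mulVec w s ≤ R p0 s + γ * (Q p0).mulVec w s) :
    (∃ p0, ∀ p s, V p s ≤ V p0 s)
    ∧ (∀ s, (⨆ p, (R p s + γ * (Q p).mulVec (fun s' => ⨆ p', V p' s') s)) = ⨆ p, V p s)
    ∧ (∀ w : S → ℝ, (∀ s, (⨆ p, (R p s + γ * (Q p).mulVec w s)) = w s) →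
        ∀ s, w s = ⨆ p, V p s) := by
  have iSup_eq : ∀ (f : Pol → ℝ) (p0 : Pol), (∀ p, f p ≤ f p0) → (⨆ p, f p) = f p0 := by
    intro f p0 h
    have : Nonempty Pol := ⟨p0⟩
    exact le_antisymm (ciSup_le h) (le_ciSup ⟨f p0, by rintro _ ⟨p, rfl⟩; exact h p⟩ p0)
  choose g hg using hgr
  -- A fixed point `w` is the value of its greedy policy and dominates all other values.
  have key : ∀ w : S → ℝ, (∀ s, R (g w) s + γ * (Q (g w)).mulVec w s = w s) →
      V (g w) = w ∧ ∀ p s, V p s ≤ w s := by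
    intro w hw
    have hle : ∀ p s, V p s ≤ w s := by
      intro p s
      have := nonpos_of_le_discounted hγ (h0 p) (h1 p) (d := V p - w) (fun s => by
        have e1 := hV p s
        have e2 := hg w p s
        have e3 := hw s
        rw [Matrix.mulVec_sub, Pi.sub_apply, Pi.sub_apply, mul_sub]
        linarith) s
      rw [Pi.sub_apply] at this
      linarith
    refine ⟨funext fun s => le_antisymm (hle _ s) ?_, hle⟩
    have := nonpos_of_le_discounted hγ (h0 (g w)) (h1 (g w)) (d := w - V (g w)) (fun s => by
      have e1 := hV (g w) s
      have e3 := hw s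
      rw [Matrix.mulVec_sub, Pi.sub_apply, Pi.sub_apply, mul_sub]
      linarith) s
    rw [Pi.sub_apply] at this
    linarith
  have hsup : ∀ w : S → ℝ, (∀ s, R (g w) s + γ * (Q (g w)).mulVec w s = w s) →
      ∀ s, (⨆ p, V p s) = w s := by
    intro w hw s
    obtain ⟨e, hle⟩ := key w hw
    rw [iSup_eq (fun p => V p s) (g w) (fun p => by rw [e]; exact hle p s), e]
  have hone : ∀ (w w' : S → ℝ) (s : S),
      (R (g w) s + γ * (Q (g w)).mulVec w s) - (R (g w') s + γ * (Q (g w')).mulVec w' s)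
        ≤ γ * dist w w' := by
    intro w w' s
    have e1 := hg w' (g w) s
    have e2 := abs_mulVec_le (h0 (g w)) (h1 (g w)) (d := w - w') (C := dist w w')
      (fun s => by
        rw [Pi.sub_apply, ← Real.dist_eq]
        exact dist_le_pi_dist w w' s) s
    have e3 := mul_le_mul_of_nonneg_left ((le_abs_self _).trans e2) hγ.1.le
    rw [Matrix.mulVec_sub, Pi.sub_apply, mul_sub] at e3
    linarith
  have hcontr : ContractingWith ⟨γ, hγ.1.le⟩
      (fun (w : S → ℝ) s => R (g w) s + γ * (Q (g w)).mulVec w s) := by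
    refine ⟨by exact_mod_cast hγ.2, LipschitzWith.of_dist_le_mul fun w w' => ?_⟩
    refine (dist_pi_le_iff (mul_nonneg hγ.1.le dist_nonneg)).2 fun s => ?_
    rw [Real.dist_eq]
    refine abs_sub_le_iff.2 ⟨hone w w' s, ?_⟩
    have := hone w' w s
    rwa [dist_comm] at this
  obtain ⟨w, hw⟩ : ∃ w : S → ℝ, ∀ s, R (g w) s + γ * (Q (g w)).mulVec w s = w s :=
    ⟨_, fun s => congrFun hcontr.fixedPoint_isFixedPt s⟩
  refine ⟨⟨g w, fun p s => ?_⟩, fun s => ?_, fun u hu s => ?_⟩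
  · rw [(key w hw).1]
    exact (key w hw).2 p s
  · have e : (fun s' => ⨆ p', V p' s') = w := funext (hsup w hw)
    rw [e, hsup w hw s, iSup_eq _ (g w) (fun p => hg w p s), hw s]
  · refine (hsup u (fun s => ?_) s).symm
    rw [← iSup_eq (fun p => R p s + γ * (Q p).mulVec u s) (g u) (fun p => hg u p s)]
    exact hu s

/-! ### Integrals of continuous functions on compact spaces -/

lemma continuous_integrable_of_compact {X : Type*} [TopologicalSpace X] [CompactSpace X]
    [MeasurableSpace X] [OpensMeasurableSpace X] (m : Measure X) [IsFiniteMeasure m]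
    {f : X → ℝ} (hf : Continuous f) : Integrable f m :=
  hf.integrable_of_hasCompactSupport (HasCompactSupport.of_compactSpace f)

lemma continuous_integral_right {A B : Type*}
    [MetricSpace A] [CompactSpace A] [MetricSpace B] [CompactSpace B]
    [MeasurableSpace B] [BorelSpace B] (m : Measure B) [IsFiniteMeasure m]
    {f : A → B → ℝ} (hf : Continuous fun p : A × B => f p.1 p.2) :
    Continuous fun a => ∫ b, f a b ∂m := by
  have := continuous_parametric_integral_of_continuous (μ := m) (f := f) hf isCompact_univ
  simpa using this

lemma Pmat_nonneg {S A B : Type*} [Fintype S] [MeasurableSpace A] [MeasurableSpace B]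
    {P : S → S → A → B → ℝ} (hP0 : ∀ s s' a b, 0 ≤ P s s' a b)
    (μ : S → ProbabilityMeasure A) (ν : S → ProbabilityMeasure B) (s s' : S) :
    0 ≤ Pmat P μ ν s s' :=
  integral_nonneg fun a => integral_nonneg fun b => hP0 s s' a b

section Game

variable {S A B : Type*} [Fintype S]
    [MetricSpace A] [CompactSpace A] [MeasurableSpace A] [BorelSpace A]
    [MetricSpace B] [CompactSpace B] [MeasurableSpace B] [BorelSpace B]

lemma Tpol_eq_integral (γ : ℝ)
    {r : S → A → B → ℝ} (hr : ∀ s, Continuous fun p : A × B => r s p.1 p.2)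
    {P : S → S → A → B → ℝ} (hPcont : ∀ s s', Continuous fun p : A × B => P s s' p.1 p.2)
    (μ : S → ProbabilityMeasure A) (ν : S → ProbabilityMeasure B) (w : S → ℝ) (s : S) :
    Tpol γ r P μ ν w s = ∫ a, ((∫ b, r s a b ∂(ν s : Measure B)) +
      γ * ∑ s', (∫ b, P s s' a b ∂(ν s : Measure B)) * w s') ∂(μ s : Measure A) := by
  have c1 := continuous_integral_right (ν s : Measure B) (hr s)
  have c2 := fun s' => continuous_integral_right (ν s : Measure B) (hPcont s s')
  rw [integral_add (continuous_integrable_of_compact _ c1)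
    (continuous_integrable_of_compact _ (by fun_prop)), integral_const_mul, integral_finsetSum]
  · simp only [integral_mul_const]
    rfl
  · intro s' _
    exact continuous_integrable_of_compact _ (by fun_prop)

lemma Pmat_row_sum {P : S → S → A → B → ℝ}
    (hPcont : ∀ s s', Continuous fun p : A × B => P s s' p.1 p.2)
    (hPsum : ∀ s a b, ∑ s', P s s' a b = 1)
    (μ : S → ProbabilityMeasure A) (ν : S → ProbabilityMeasure B) (s : S) :
    ∑ s', Pmat P μ ν s s' = 1 := by
  have c2 := fun s' => continuous_integral_right (ν s : Measure B) (hPcont s s')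
  simp only [Pmat, Matrix.of_apply]
  rw [← integral_finsetSum _ fun s' _ => continuous_integrable_of_compact _ (c2 s')]
  have : ∀ a, ∑ s', ∫ b, P s s' a b ∂(ν s : Measure B) = 1 := by
    intro a
    have c3 : ∀ s', Continuous fun b => P s s' a b :=
      fun s' => (hPcont s s').comp (Continuous.prodMk_right a)
    rw [← integral_finsetSum _ fun s' _ => continuous_integrable_of_compact _ (c3 s')]
    simp [hPsum]
  simp [this]

/-- An optimal choice plays, at each state `s`, the Dirac mass at a maximizer of the one-step payoff
`a ↦ ∫ (r(s,a,b) + γ ∑ P(s'|s,a,b) w(s')) dν(s)(b)`. -/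
lemma exists_greedy [Nonempty A] (γ : ℝ)
    {r : S → A → B → ℝ} (hr : ∀ s, Continuous fun p : A × B => r s p.1 p.2)
    {P : S → S → A → B → ℝ} (hPcont : ∀ s s', Continuous fun p : A × B => P s s' p.1 p.2)
    (ν : S → ProbabilityMeasure B) (w : S → ℝ) :
    ∃ μ0 : S → ProbabilityMeasure A, ∀ (μ : S → ProbabilityMeasure A) (s : S),
      Tpol γ r P μ ν w s ≤ Tpol γ r P μ0 ν w s := by
  have hc : ∀ s, Continuous fun a => (∫ b, r s a b ∂(ν s : Measure B)) +
      γ * ∑ s', (∫ b, P s s' a b ∂(ν s : Measure B)) * w s' := by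
    intro s
    have c1 := continuous_integral_right (ν s : Measure B) (hr s)
    have c2 := fun s' => continuous_integral_right (ν s : Measure B) (hPcont s s')
    fun_prop
  have hmax := fun s => isCompact_univ.exists_isMaxOn (Set.univ_nonempty (α := A))
    (hc s).continuousOn
  choose a0 _ ha0 using hmax
  let μ0 : S → ProbabilityMeasure A := fun s => ⟨Measure.dirac (a0 s), inferInstance⟩
  have hμ0 : ∀ s, (μ0 s : Measure A) = Measure.dirac (a0 s) := fun s => rfl
  refine ⟨μ0, fun μ s => ?_⟩
  rw [Tpol_eq_integral γ hr hPcont, Tpol_eq_integral γ hr hPcont]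
  rw [hμ0, integral_dirac]
  refine (integral_mono (continuous_integrable_of_compact _ (hc s)) (integrable_const _)
    fun a => ha0 s (Set.mem_univ a)).trans ?_
  simp

/-! ### The two players -/

lemma maximizer_side [DecidableEq S] [Nonempty A] (γ : ℝ) (hγ : γ ∈ Set.Ioo (0 : ℝ) 1)
    (r : S → A → B → ℝ) (hr : ∀ s, Continuous fun p : A × B => r s p.1 p.2)
    (P : S → S → A → B → ℝ)
    (hPcont : ∀ s s', Continuous fun p : A × B => P s s' p.1 p.2)
    (hP0 : ∀ s s' a b, 0 ≤ P s s' a b)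
    (hPsum : ∀ s a b, ∑ s', P s s' a b = 1) (ν : S → ProbabilityMeasure B) :
    (∃ μ0 : S → ProbabilityMeasure A, ∀ (μ : S → ProbabilityMeasure A) (s : S),
        vVal γ r P μ ν s ≤ vVal γ r P μ0 ν s)
    ∧ (∀ s : S,
        (⨆ μ : S → ProbabilityMeasure A,
            Tpol γ r P μ ν (fun s' => ⨆ μ' : S → ProbabilityMeasure A, vVal γ r P μ' ν s') s)
          = ⨆ μ : S → ProbabilityMeasure A, vVal γ r P μ ν s)
    ∧ (∀ w : S → ℝ,
        (∀ s : S, (⨆ μ : S → ProbabilityMeasure A, Tpol γ r P μ ν w s) = w s) →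
        ∀ s : S, w s = ⨆ μ : S → ProbabilityMeasure A, vVal γ r P μ ν s) :=
  mdp_optimality hγ (fun μ => rPol r μ ν) (fun μ => vVal γ r P μ ν) (fun μ => Pmat P μ ν)
    (fun μ => Pmat_nonneg hP0 μ ν) (fun μ => Pmat_row_sum hPcont hPsum μ ν)
    (fun μ s => congrFun (discounted_value_eq hγ (Pmat_nonneg hP0 μ ν)
      (Pmat_row_sum hPcont hPsum μ ν) (rPol r μ ν)) s)
    (exists_greedy γ hr hPcont ν)

lemma integral_swap_of_compact {f : A → B → ℝ} (hf : Continuous fun p : A × B => f p.1 p.2)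
    (μ : Measure A) (ν : Measure B) [IsFiniteMeasure μ] [IsFiniteMeasure ν] :
    ∫ b, ∫ a, f a b ∂μ ∂ν = ∫ a, ∫ b, f a b ∂ν ∂μ :=
  (integral_integral_swap_of_hasCompactSupport hf (HasCompactSupport.of_compactSpace _)).symm

lemma rPol_swap {r : S → A → B → ℝ} (hr : ∀ s, Continuous fun p : A × B => r s p.1 p.2)
    (μ : S → ProbabilityMeasure A) (ν : S → ProbabilityMeasure B) :
    rPol (fun s b a => -r s a b) ν μ = -rPol r μ ν := by
  funext s
  simp only [rPol, Pi.neg_apply, integral_neg]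
  rw [integral_swap_of_compact (hr s)]

lemma Pmat_swap {P : S → S → A → B → ℝ}
    (hPcont : ∀ s s', Continuous fun p : A × B => P s s' p.1 p.2)
    (μ : S → ProbabilityMeasure A) (ν : S → ProbabilityMeasure B) :
    Pmat (fun s s' b a => P s s' a b) ν μ = Pmat P μ ν := by
  ext s s'
  exact integral_swap_of_compact (hPcont s s') _ _

lemma Tpol_swap (γ : ℝ) {r : S → A → B → ℝ}
    (hr : ∀ s, Continuous fun p : A × B => r s p.1 p.2) {P : S → S → A → B → ℝ}
    (hPcont : ∀ s s', Continuous fun p : A × B => P s s' p.1 p.2)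
    (μ : S → ProbabilityMeasure A) (ν : S → ProbabilityMeasure B) (w : S → ℝ) (s : S) :
    Tpol γ (fun s b a => -r s a b) (fun s s' b a => P s s' a b) ν μ (fun s' => -w s') s
      = -Tpol γ r P μ ν w s := by
  have e : (fun s' => -w s') = -w := rfl
  simp only [Tpol, rPol_swap hr, Pmat_swap hPcont, e, Matrix.mulVec_neg, Pi.neg_apply]
  ring

lemma vVal_swap [DecidableEq S] (γ : ℝ) {r : S → A → B → ℝ}
    (hr : ∀ s, Continuous fun p : A × B => r s p.1 p.2) {P : S → S → A → B → ℝ}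
    (hPcont : ∀ s s', Continuous fun p : A × B => P s s' p.1 p.2)
    (μ : S → ProbabilityMeasure A) (ν : S → ProbabilityMeasure B) (s : S) :
    vVal γ (fun s b a => -r s a b) (fun s s' b a => P s s' a b) ν μ s = -vVal γ r P μ ν s := by
  simp only [vVal, rPol_swap hr, Pmat_swap hPcont, Matrix.mulVec_neg, smul_neg, tsum_neg,
    Pi.neg_apply]

end Game

lemma iSup_neg_real {ι : Type*} (f : ι → ℝ) : (⨆ i, -f i) = -⨅ i, f i := by
  rw [iInf, Real.sInf_def, neg_neg, iSup]
  congr 1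
  ext x
  simp [neg_eq_iff_eq_neg]

theorem stmt5 {S A B : Type*} [Fintype S] [DecidableEq S]
    [MetricSpace A] [CompactSpace A] [Nonempty A] [MeasurableSpace A] [BorelSpace A]
    [MetricSpace B] [CompactSpace B] [Nonempty B] [MeasurableSpace B] [BorelSpace B]
    (γ : ℝ) (hγ : γ ∈ Set.Ioo (0:ℝ) 1)
    (r : S → A → B → ℝ) (hr : ∀ s, Continuous fun p : A × B => r s p.1 p.2)
    (P : S → S → A → B → ℝ)
    (hPcont : ∀ s s', Continuous fun p : A × B => P s s' p.1 p.2)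
    (hP0 : ∀ s s' a b, 0 ≤ P s s' a b) (hP1 : ∀ s s' a b, P s s' a b ≤ 1)
    (hPsum : ∀ s a b, ∑ s', P s s' a b = 1)
    :
    (∀ ν : S → ProbabilityMeasure B,
      (∃ μ0 : S → ProbabilityMeasure A, ∀ (μ : S → ProbabilityMeasure A) (s : S),
          vVal γ r P μ ν s ≤ vVal γ r P μ0 ν s)
      ∧ (∀ s : S,
          (⨆ μ : S → ProbabilityMeasure A,
              Tpol γ r P μ ν (fun s' => ⨆ μ' : S → ProbabilityMeasure A, vVal γ r P μ' ν s') s)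
            = ⨆ μ : S → ProbabilityMeasure A, vVal γ r P μ ν s)
      ∧ (∀ w : S → ℝ,
          (∀ s : S, (⨆ μ : S → ProbabilityMeasure A, Tpol γ r P μ ν w s) = w s) →
          ∀ s : S, w s = ⨆ μ : S → ProbabilityMeasure A, vVal γ r P μ ν s))
    ∧ (∀ μ : S → ProbabilityMeasure A,
      (∃ ν0 : S → ProbabilityMeasure B, ∀ (ν : S → ProbabilityMeasure B) (s : S),
          vVal γ r P μ ν0 s ≤ vVal γ r P μ ν s)
      ∧ (∀ s : S,
          (⨅ ν : S → ProbabilityMeasure B,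
              Tpol γ r P μ ν (fun s' => ⨅ ν' : S → ProbabilityMeasure B, vVal γ r P μ ν' s') s)
            = ⨅ ν : S → ProbabilityMeasure B, vVal γ r P μ ν s)
      ∧ (∀ w : S → ℝ,
          (∀ s : S, (⨅ ν : S → ProbabilityMeasure B, Tpol γ r P μ ν w s) = w s) →
          ∀ s : S, w s = ⨅ ν : S → ProbabilityMeasure B, vVal γ r P μ ν s)) := by
  refine ⟨fun ν => maximizer_side γ hγ r hr P hPcont hP0 hPsum ν, fun μ => ?_⟩
  obtain ⟨⟨ν0, h1⟩, h2, h3⟩ := maximizer_side γ hγ (fun s b a => -r s a b)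
    (fun s => ((hr s).comp continuous_swap).neg) (fun s s' b a => P s s' a b)
    (fun s s' => (hPcont s s').comp continuous_swap) (fun s s' b a => hP0 s s' a b)
    (fun s b a => hPsum s a b) μ
  simp only [vVal_swap γ hr hPcont, iSup_neg_real] at h1 h2 h3
  simp only [Tpol_swap γ hr hPcont, iSup_neg_real] at h2
  refine ⟨⟨ν0, fun ν s => neg_le_neg_iff.1 (h1 ν s)⟩, fun s => neg_injective (h2 s),
    fun w hw s => neg_injective (h3 (fun s' => -w s') (fun s => ?_) s)⟩
  simp only [Tpol_swap γ hr hPcont, iSup_neg_real, hw]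
end
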